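/- Let v > 0, δ₂ ≥ 0 and t_s be real numbers with 0 ≤ t_s ≤ 2. Set Δ = 1 + 1/(4·v), T = t_s·Δ, and w = (v²/2)·(2·T − t_s)/(v·T + δ₂ + 1). Then 0 ≤ w and 2·w < v; i.e., the chosen wall speed is nonnegative and the ball's speed v − 2·w between the two moving walls remains positive. -/

import Mathlib

/-!
A ball of speed `v` starting at time `t` has travelled `v * (T - t)` when it meets the wall at time
`T`. Since `v - 2 * w = v * (δ + 1 - v * (T - t)) / (v * T + δ + 1)` for the chosen wall speed `w`,
the ball keeps a positive speed exactly when that distance is less than `δ + 1`. For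
`T = t * (1 + 1 / (4 * v))` the distance is `t / 4`.
-/

section

variable {v δ t T : ℝ}

/-- The speed of the first moving wall when a ball of speed `v` with start offset `t` collides with
it at time `T`; `δ` is the paper's `δ₂`. The collision time is kept as a free parameter. -/
noncomputable def wallSpeed (v δ t T : ℝ) : ℝ :=
  v ^ 2 / 2 * (2 * T - t) / (v * T + δ + 1)

theorem wallSpeed_nonneg (hT : t ≤ 2 * T) (hden : 0 ≤ v * T + δ + 1) :
    0 ≤ wallSpeed v δ t T :=
  div_nonneg (mul_nonneg (by positivity) (sub_nonneg.2 hT)) hden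

theorem sub_two_mul_wallSpeed (hden : v * T + δ + 1 ≠ 0) :
    v - 2 * wallSpeed v δ t T = v * (δ + 1 - v * (T - t)) / (v * T + δ + 1) := by
  unfold wallSpeed
  field_simp
  ring

theorem two_mul_wallSpeed_lt_iff (hv : 0 < v) (hden : 0 < v * T + δ + 1) :
    2 * wallSpeed v δ t T < v ↔ v * (T - t) < δ + 1 := by
  rw [← sub_pos, sub_two_mul_wallSpeed hden.ne', div_pos_iff_of_pos_right hden,
    mul_pos_iff_of_pos_left hv, sub_pos]

/-- The time `t₁(t)` at which a ball of speed `v` with start offset `t` is made to collide with the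
first moving wall. -/
noncomputable def collisionTime (v t : ℝ) : ℝ :=
  t * (1 + 1 / (4 * v))

theorem le_collisionTime (hv : 0 < v) (ht : 0 ≤ t) : t ≤ collisionTime v t :=
  le_mul_of_one_le_right ht (le_add_of_nonneg_right (by positivity))

theorem mul_collisionTime_sub_self (hv : v ≠ 0) : v * (collisionTime v t - t) = t / 4 := by
  unfold collisionTime
  field_simp
  ring

theorem moving_wall_speed_bounds_general (hv : 0 < v) (ht : 0 ≤ t) (htδ : t < 4 * (δ + 1)) :
    0 ≤ wallSpeed v δ t (collisionTime v t) ∧ 2 * wallSpeed v δ t (collisionTime v t) < v := by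
  have hT : t ≤ collisionTime v t := le_collisionTime hv ht
  have hden : 0 < v * collisionTime v t + δ + 1 := by
    have hvT : 0 ≤ v * collisionTime v t := mul_nonneg hv.le (ht.trans hT)
    linarith
  refine ⟨wallSpeed_nonneg (by linarith) hden.le, (two_mul_wallSpeed_lt_iff hv hden).2 ?_⟩
  rw [mul_collisionTime_sub_self hv.ne']
  linarith

end

/-- With the choice `t₁(t_s) = t_s·(1 + 1/(4v))`, the resulting wall speed `w`
is nonnegative and satisfies `2·w < v`, so the ball's speed `v − 2·w` between
the two moving walls remains positive. -/
theorem moving_wall_speed_bounds (v δ₂ t_s : ℝ)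
    (hv : 0 < v) (hδ₂ : 0 ≤ δ₂) (hts0 : 0 ≤ t_s) (hts2 : t_s ≤ 2) :
    let Δ : ℝ := 1 + 1 / (4 * v)
    let T : ℝ := t_s * Δ
    let w : ℝ := (v ^ 2 / 2) * (2 * T - t_s) / (v * T + δ₂ + 1)
    0 ≤ w ∧ 2 * w < v :=
  moving_wall_speed_bounds_general hv hts0 (by linarith)
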